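/- arXiv:math/0010250 — 2 statements merged into one kernel-verified Lean document; each statement's English description precedes it below -/
import Mathlib

section
/- For even N = 2n, the FRT–Clifford algebra Cl_{2n}(q,c) is a simple algebra: its only two-sided ideals are {0} and the whole algebra. -/
noncomputable section

namespace FRT

/-- The "dual" index `i' = N+1-i` (0-indexed: `N-1-i`). -/
def dual {N : ℕ} (i : Fin N) : Fin N := ⟨N - 1 - i.val, by have := i.2; omega⟩

/-- Generators of the free algebra. -/
def gen {N : ℕ} (i : Fin N) : FreeAlgebra ℂ (Fin N) := FreeAlgebra.ι ℂ i

/-- The sum `∑_{k<i} q^{2k-2i+2} γ_k γ_{k'}` appearing in the defining relations. -/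
def pairSum (N : ℕ) (q : ℂ) (i : Fin N) : FreeAlgebra ℂ (Fin N) :=
  ∑ k ∈ Finset.Iio i, (q ^ (2 * (k.val : ℤ) - 2 * (i.val : ℤ) + 2)) • (gen k * gen (dual k))

/-- The defining relations of the FRT–Clifford algebra `Cl_N(q,c)`. -/
inductive Rel (N : ℕ) (q c : ℂ) : FreeAlgebra ℂ (Fin N) → FreeAlgebra ℂ (Fin N) → Prop
  | sq (i : Fin N) (h : 2 * i.val + 1 ≠ N) : Rel N q c (gen i * gen i) 0
  | swap (i j : Fin N) (hlt : i < j) (h : i.val + j.val + 1 ≠ N) :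
      Rel N q c (gen j * gen i) ((-(q ^ 2)) • (gen i * gen j))
  | pair (i : Fin N) (h : 2 * i.val + 1 < N) :
      Rel N q c (gen (dual i) * gen i)
        (-(gen i * gen (dual i)) + (q ^ 2 - q⁻¹ ^ 2) • pairSum N q i +
          algebraMap ℂ _ (c ^ 2 * q ^ ((N : ℤ) - 2 * (i.val : ℤ) - 1) * (q + q⁻¹)))
  | middle (i : Fin N) (h : 2 * i.val + 1 = N) :
      Rel N q c (gen i * gen i) ((q - q⁻¹) • pairSum N q i + algebraMap ℂ _ (c ^ 2))

/-- The FRT–Clifford algebra `Cl_N(q,c)`. -/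
abbrev Cl (N : ℕ) (q c : ℂ) := RingQuot (Rel N q c)

/-- The generators `γ_i` of `Cl_N(q,c)`. -/
def γ (N : ℕ) (q c : ℂ) (i : Fin N) : Cl N q c :=
  RingQuot.mkAlgHom ℂ (Rel N q c) (gen i)

/-- Ordered product `γ_1 γ_2 ⋯ γ_m` of the first `m` generators. -/
def prodFirst (N : ℕ) (q c : ℂ) (m : ℕ) : Cl N q c :=
  (((List.finRange N).take m).map (γ N q c)).prod

/-- Ordered product `γ_{m+1} γ_{m+2} ⋯ γ_N` (0-indexed: indices `m,…,N-1`). -/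
def prodFrom (N : ℕ) (q c : ℂ) (m : ℕ) : Cl N q c :=
  (((List.finRange N).drop m).map (γ N q c)).prod

/-- The ordered monomial `γ_1^{i_1} ⋯ γ_N^{i_N}` for `i ∈ {0,1}^N`. -/
def monoB (N : ℕ) (q c : ℂ) (f : Fin N → Bool) : Cl N q c :=
  ((List.finRange N).map (fun i => if f i then γ N q c i else 1)).prod

/-- The ordered monomial `γ_1^{i_1} ⋯ γ_n^{i_n}` for `i ∈ {0,1}^n`, `n ≤ N`. -/
def monoLow (N : ℕ) (q c : ℂ) {n : ℕ} (h : n ≤ N) (f : Fin n → Bool) : Cl N q c :=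
  ((List.finRange n).map (fun j => if f j then γ N q c (Fin.castLE h j) else 1)).prod

/-- `z` is homogeneous of `∂_i`-degree `0`: it is fixed by every algebra endomorphism
rescaling `γ_i` by `t` and `γ_{i'}` by `t⁻¹`. -/
def DegZeroAt (N : ℕ) (q c : ℂ) (i : ℕ) (z : Cl N q c) : Prop :=
  ∀ t : ℂ, t ≠ 0 → ∀ f : Cl N q c →ₐ[ℂ] Cl N q c,
    (∀ j : Fin N, f (γ N q c j) =
      (if j.val = i then t else if j.val + i + 1 = N then t⁻¹ else 1) • γ N q c j) →
    f z = z

section MatrixUnits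

theorem eq_neg_add_add_iff {G : Type*} [AddCommGroup G] {x y z w : G} :
    x = -y + z + w ↔ y + x = z + w := by
  rw [add_assoc, eq_neg_add_iff_add_eq]

variable {A B : Type*} [Ring A] [Algebra ℂ A] [Ring B] [Algebra ℂ B]

theorem mul_mul_self_of_anticommutator {a b : A} {s : ℂ} (haa : a * a = 0)
    (hab : a * b + b * a = algebraMap ℂ A s) : a * (b * a) = s • a := by
  rw [← eq_sub_iff_add_eq'] at hab
  rw [hab, mul_sub, ← mul_assoc, haa, zero_mul, sub_zero, ← Algebra.commutes, Algebra.smul_def]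

/-- If `A` is generated, over the image of `B`, by elements `a`, `b` commuting with that image and
satisfying `a² = b² = 0` and `ab + ba = s ≠ 0`, then `A` inherits from `B` the property that its
only two-sided ideals are the trivial ones. -/
theorem eq_bot_or_eq_top_of_anticommuting_pair (φ : B →ₐ[ℂ] A) (a b : A) (s : ℂ) (hs : s ≠ 0)
    (haa : a * a = 0) (hbb : b * b = 0) (hsum : a * b + b * a = algebraMap ℂ A s)
    (ha : ∀ p, a * φ p = φ p * a) (hb : ∀ p, b * φ p = φ p * b)
    (hspan : ∀ x, ∃ p r t w, x = φ p * (a * b) + φ r * a + φ t * b + φ w)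
    (hB : ∀ J : TwoSidedIdeal B, J = ⊥ ∨ J = ⊤) (I : TwoSidedIdeal A) : I = ⊥ ∨ I = ⊤ := by
  rcases hB (I.comap φ) with hJ | hJ
  · left
    have hzero : ∀ p, φ p ∈ I → p = 0 := fun p hp => by
      have : p ∈ I.comap φ := by rwa [TwoSidedIdeal.mem_comap]
      rwa [hJ, TwoSidedIdeal.mem_bot] at this
    have hsmul : ∀ {x : A}, s • x ∈ I → x ∈ I := fun {x} hx => by
      have := I.mul_mem_left (algebraMap ℂ A s⁻¹) _ hx
      rwa [← Algebra.smul_def, smul_smul, inv_mul_cancel₀ hs, one_smul] at this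
    have hzero_a : ∀ p, φ p * a ∈ I → p = 0 := fun p hp => hzero p <| hsmul <| by
      have h := I.add_mem (I.mul_mem_right _ b hp) (I.mul_mem_left b _ hp)
      have h' : φ p * a * b + b * (φ p * a) = s • φ p := by
        rw [← mul_assoc b, hb, mul_assoc, mul_assoc, ← mul_add, hsum, ← Algebra.commutes,
          Algebra.smul_def]
      rwa [h'] at h
    have hzero_b : ∀ p, φ p * b ∈ I → p = 0 := fun p hp => hzero p <| hsmul <| by
      have h := I.add_mem (I.mul_mem_left a _ hp) (I.mul_mem_right _ a hp)
      have h' : a * (φ p * b) + φ p * b * a = s • φ p := by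
        rw [← mul_assoc a, ha, mul_assoc, mul_assoc, ← mul_add, hsum, ← Algebra.commutes,
          Algebra.smul_def]
      rwa [h'] at h
    have haba : a * b * a = s • a := by
      rw [mul_assoc, mul_mul_self_of_anticommutator haa hsum]
    have hbab : b * a * b = s • b := by
      rw [mul_assoc, mul_mul_self_of_anticommutator hbb ((add_comm _ _).trans hsum)]
    rw [eq_bot_iff]
    intro x hx
    obtain ⟨p, r, t, w, rfl⟩ := hspan x
    have ht : t = 0 := hzero_a t <| hsmul <| by
      have h := I.mul_mem_right _ a (I.mul_mem_left a _ hx)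
      have h' : a * (φ p * (a * b) + φ r * a + φ t * b + φ w) * a = s • (φ t * a) := by
        simp only [mul_add, add_mul, ← mul_assoc, ha]
        simp only [mul_assoc, haa, zero_mul, mul_zero, zero_add, add_zero]
        rw [← mul_assoc a b, haba, mul_smul_comm]
      rwa [h'] at h
    have hr : r = 0 := hzero_b r <| hsmul <| by
      have h := I.mul_mem_right _ b (I.mul_mem_left b _ hx)
      have h' : b * (φ p * (a * b) + φ r * a + φ t * b + φ w) * b = s • (φ r * b) := by
        simp only [mul_add, add_mul, ← mul_assoc, hb]
        simp only [mul_assoc, hbb, zero_mul, mul_zero, zero_add, add_zero]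
        rw [← mul_assoc b a, hbab, mul_smul_comm]
      rwa [h'] at h
    subst ht hr
    simp only [map_zero, zero_mul, add_zero] at hx ⊢
    have hw : w = 0 := hzero_a w <| by
      have h := I.mul_mem_left a _ hx
      have h' : a * (φ p * (a * b) + φ w) = φ w * a := by
        simp only [mul_add, ← mul_assoc, ha]
        simp only [mul_assoc, haa, zero_mul, mul_zero, zero_add]
      rwa [h'] at h
    subst hw
    simp only [map_zero, add_zero] at hx ⊢
    have hp : p = 0 := hzero_a p <| hsmul <| by
      have h := I.mul_mem_right _ a hx
      rwa [mul_assoc, haba, mul_smul_comm] at h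
    simp [hp]
  · right
    have h1 : (1 : B) ∈ I.comap φ := hJ ▸ TwoSidedIdeal.mem_top _
    rw [TwoSidedIdeal.mem_comap, map_one] at h1
    rw [eq_top_iff]
    intro x _
    simpa using I.mul_mem_left x 1 h1

end MatrixUnits

section Generators

variable {N : ℕ} {q c : ℂ}

theorem γ_sq (i : Fin N) (h : 2 * i.val + 1 ≠ N) : γ N q c i * γ N q c i = 0 := by
  have := RingQuot.mkAlgHom_rel ℂ (Rel.sq (q := q) (c := c) i h)
  rwa [map_mul, map_zero] at this

theorem γ_swap (i j : Fin N) (hlt : i < j) (h : i.val + j.val + 1 ≠ N) :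
    γ N q c j * γ N q c i = (-(q ^ 2)) • (γ N q c i * γ N q c j) := by
  have := RingQuot.mkAlgHom_rel ℂ (Rel.swap (q := q) (c := c) i j hlt h)
  rwa [map_smul, map_mul, map_mul] at this

theorem γ_pair (i : Fin N) (h : 2 * i.val + 1 < N) :
    γ N q c i * γ N q c (dual i) + γ N q c (dual i) * γ N q c i =
      (q ^ 2 - q⁻¹ ^ 2) • ∑ k ∈ Finset.Iio i,
        (q ^ (2 * (k.val : ℤ) - 2 * (i.val : ℤ) + 2)) • (γ N q c k * γ N q c (dual k)) +
      algebraMap ℂ _ (c ^ 2 * q ^ ((N : ℤ) - 2 * (i.val : ℤ) - 1) * (q + q⁻¹)) := by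
  have := RingQuot.mkAlgHom_rel ℂ (Rel.pair (q := q) (c := c) i h)
  simp only [map_add, map_neg, map_mul, pairSum, map_sum, map_smul, AlgHom.commutes] at this
  have := eq_neg_add_add_iff.1 this
  simpa only [map_mul, map_add] using! this

theorem induction_left {P : Cl N q c → Prop} (h1 : P 1) (hadd : ∀ x y, P x → P y → P (x + y))
    (hsmul : ∀ (t : ℂ) x, P x → P (t • x)) (hγ : ∀ i x, P x → P (γ N q c i * x))
    (x : Cl N q c) : P x := by
  suffices ∀ z : FreeAlgebra ℂ (Fin N), ∀ y, P y → P (RingQuot.mkAlgHom ℂ (Rel N q c) z * y) by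
    obtain ⟨z, rfl⟩ := RingQuot.mkAlgHom_surjective ℂ (Rel N q c) x
    simpa using this z 1 h1
  intro z
  induction z using FreeAlgebra.induction with
  | grade0 r => intro y hy; rw [AlgHom.commutes, ← Algebra.smul_def]; exact hsmul r y hy
  | grade1 i => exact hγ i
  | mul u v hu hv => intro y hy; rw [map_mul, mul_assoc]; exact hu _ (hv _ hy)
  | add u v hu hv => intro y hy; rw [map_add, add_mul]; exact hadd _ _ (hu _ hy) (hv _ hy)

end Generators

/-- The inclusion of the indices strictly between the first and the last one. -/
def inner {N : ℕ} (j : Fin N) : Fin (N + 2) := j.succ.castSucc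

@[simp] theorem inner_val {N : ℕ} (j : Fin N) : (inner j).val = j.val + 1 := by simp [inner]

theorem inner_lt_inner {N : ℕ} {i j : Fin N} (h : i < j) : inner i < inner j := by
  rw [Fin.lt_def] at h ⊢
  simpa using h

theorem dual_inner {N : ℕ} (j : Fin N) : dual (inner j) = inner (dual j) := by
  ext; simp [dual]; omega

theorem dual_zero {N : ℕ} : dual (0 : Fin (N + 2)) = Fin.last (N + 1) := by
  ext; simp [dual]

theorem sum_Iio_inner {N : ℕ} {M : Type*} [AddCommMonoid M] (i : Fin N) (F : Fin (N + 2) → M) :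
    ∑ k ∈ Finset.Iio (inner i), F k = F 0 + ∑ k ∈ Finset.Iio i, F (inner k) := by
  have hinj : Function.Injective (inner : Fin N → Fin (N + 2)) :=
    (Fin.castSucc_injective _).comp (Fin.succ_injective _)
  have h : Finset.Iio (inner i) = insert 0 ((Finset.Iio i).image inner) := by
    ext k
    simp only [Finset.mem_Iio, Finset.mem_insert, Finset.mem_image, Fin.lt_def, Fin.ext_iff,
      inner_val, Fin.val_zero]
    constructor
    · intro hk
      by_cases h0 : k.val = 0
      · exact Or.inl h0
      · exact Or.inr ⟨⟨k.val - 1, by omega⟩, by simp only; omega, by simp only; omega⟩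
    · rintro (h0 | ⟨m, hm, hm'⟩) <;> omega
  rw [h, Finset.sum_insert, Finset.sum_image (fun _ _ _ _ h => hinj h)]
  simp [Fin.ext_iff]

theorem eq_zero_or_last_or_inner {N : ℕ} (i : Fin (N + 2)) :
    i = 0 ∨ i = Fin.last (N + 1) ∨ ∃ j : Fin N, i = inner j := by
  by_cases h0 : i.val = 0
  · exact Or.inl (Fin.ext h0)
  by_cases h1 : i.val = N + 1
  · exact Or.inr (Or.inl (Fin.ext h1))
  · exact Or.inr (Or.inr ⟨⟨i.val - 1, by omega⟩, Fin.ext (by simp; omega)⟩)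

section Step

variable (N : ℕ) (q c : ℂ)

/-- The scalar `γ_1 γ_N + γ_N γ_1`. -/
def outerScalar : ℂ := c ^ 2 * q ^ ((N : ℤ) + 1) * (q + q⁻¹)

/-- The idempotent proportional to `γ_1 γ_N`. -/
def idem : Cl (N + 2) q c :=
  (outerScalar N q c)⁻¹ • (γ (N + 2) q c 0 * γ (N + 2) q c (Fin.last (N + 1)))

/-- The element `e - q²(1 - e)` for `e = idem N q c`; multiplying the inner generators by it makes
them commute with the two outer ones. -/
def twist : Cl (N + 2) q c := (1 + q ^ 2) • idem N q c - (q ^ 2) • 1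

variable {N q c}

theorem outer_anticommutator : γ (N + 2) q c 0 * γ (N + 2) q c (Fin.last (N + 1)) +
    γ (N + 2) q c (Fin.last (N + 1)) * γ (N + 2) q c 0 =
      algebraMap ℂ _ (outerScalar N q c) := by
  have h := γ_pair (N := N + 2) (q := q) (c := c) 0 (by simp)
  have h0 : Finset.Iio (0 : Fin (N + 2)) = ∅ := by ext; simp
  rw [h0, Finset.sum_empty, smul_zero, zero_add, dual_zero] at h
  rw [h, outerScalar]
  congr 4
  push_cast
  simp
  ring

theorem γ_zero_sq : γ (N + 2) q c 0 * γ (N + 2) q c 0 = 0 := γ_sq _ (by simp)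

theorem γ_last_sq : γ (N + 2) q c (Fin.last (N + 1)) * γ (N + 2) q c (Fin.last (N + 1)) = 0 :=
  γ_sq _ (by rw [Fin.val_last]; omega)

theorem inner_mul_zero (j : Fin N) : γ (N + 2) q c (inner j) * γ (N + 2) q c 0 =
    (-(q ^ 2)) • (γ (N + 2) q c 0 * γ (N + 2) q c (inner j)) :=
  γ_swap _ _ (by simp [Fin.lt_def]) (by simp; omega)

theorem last_mul_inner (j : Fin N) : γ (N + 2) q c (Fin.last _) * γ (N + 2) q c (inner j) =
    (-(q ^ 2)) • (γ (N + 2) q c (inner j) * γ (N + 2) q c (Fin.last _)) :=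
  γ_swap _ _ (by simp [Fin.lt_def]) (by simp)

theorem commute_idem_inner (j : Fin N) :
    Commute (idem N q c) (γ (N + 2) q c (inner j)) := by
  unfold idem
  refine Commute.smul_left ?_ _
  rw [commute_iff_eq, mul_assoc, last_mul_inner, mul_smul_comm, ← mul_assoc, ← mul_assoc,
    inner_mul_zero, smul_mul_assoc]

theorem commute_twist_inner (j : Fin N) :
    Commute (twist N q c) (γ (N + 2) q c (inner j)) :=
  ((commute_idem_inner j).smul_left _).sub_left ((Commute.one_left _).smul_left _)

theorem zero_mul_last (hs : outerScalar N q c ≠ 0) : γ (N + 2) q c 0 * γ (N + 2) q c (Fin.last _) =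
    outerScalar N q c • idem N q c := by
  rw [idem, smul_smul, mul_inv_cancel₀ hs, one_smul]

theorem idem_mul_zero (hs : outerScalar N q c ≠ 0) :
    idem N q c * γ (N + 2) q c 0 = γ (N + 2) q c 0 := by
  rw [idem, smul_mul_assoc, mul_assoc,
    mul_mul_self_of_anticommutator γ_zero_sq outer_anticommutator, smul_smul,
    inv_mul_cancel₀ hs, one_smul]

theorem last_mul_idem (hs : outerScalar N q c ≠ 0) :
    γ (N + 2) q c (Fin.last _) * idem N q c = γ (N + 2) q c (Fin.last _) := by
  rw [idem, mul_smul_comm, mul_mul_self_of_anticommutator γ_last_sq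
    ((add_comm _ _).trans outer_anticommutator), smul_smul, inv_mul_cancel₀ hs, one_smul]

theorem zero_mul_idem : γ (N + 2) q c 0 * idem N q c = 0 := by
  rw [idem, mul_smul_comm, ← mul_assoc, γ_zero_sq, zero_mul, smul_zero]

theorem idem_mul_last : idem N q c * γ (N + 2) q c (Fin.last _) = 0 := by
  rw [idem, smul_mul_assoc, mul_assoc, γ_last_sq, mul_zero, smul_zero]

theorem idem_mul_idem (hs : outerScalar N q c ≠ 0) : idem N q c * idem N q c = idem N q c := by
  nth_rewrite 1 [idem]
  rw [smul_mul_assoc, mul_assoc, last_mul_idem hs, idem]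

theorem inverse_mul_twist (hs : outerScalar N q c ≠ 0) (hq : q ≠ 0) :
    ((1 + q⁻¹ ^ 2) • idem N q c + (-q⁻¹ ^ 2) • 1) * twist N q c = 1 := by
  simp only [twist, add_mul, mul_sub, smul_mul_assoc, mul_smul_comm, idem_mul_idem hs, one_mul,
    mul_one]
  match_scalars <;> field_simp
  ring

theorem zero_commute_twisted (hs : outerScalar N q c ≠ 0) (j : Fin N) :
    γ (N + 2) q c 0 * (twist N q c * γ (N + 2) q c (inner j)) =
      twist N q c * γ (N + 2) q c (inner j) * γ (N + 2) q c 0 := by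
  have h : γ (N + 2) q c 0 * twist N q c = (-(q ^ 2)) • γ (N + 2) q c 0 := by
    simp only [twist, mul_sub, mul_smul_comm, zero_mul_idem, mul_one]
    match_scalars
    ring
  have h' : twist N q c * γ (N + 2) q c 0 = γ (N + 2) q c 0 := by
    simp only [twist, sub_mul, smul_mul_assoc, idem_mul_zero hs, one_mul]
    match_scalars
    ring
  rw [mul_assoc, inner_mul_zero, mul_smul_comm, ← mul_assoc, ← mul_assoc, h, h', smul_mul_assoc]

theorem last_commute_twisted (hs : outerScalar N q c ≠ 0) (j : Fin N) :
    γ (N + 2) q c (Fin.last _) * (twist N q c * γ (N + 2) q c (inner j)) =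
      twist N q c * γ (N + 2) q c (inner j) * γ (N + 2) q c (Fin.last _) := by
  have h : γ (N + 2) q c (Fin.last _) * twist N q c = γ (N + 2) q c (Fin.last _) := by
    simp only [twist, mul_sub, mul_smul_comm, last_mul_idem hs, mul_one]
    match_scalars
    ring
  have h' : twist N q c * γ (N + 2) q c (Fin.last _) =
      (-(q ^ 2)) • γ (N + 2) q c (Fin.last _) := by
    simp only [twist, sub_mul, smul_mul_assoc, idem_mul_last, one_mul]
    match_scalars
    ring
  rw [← mul_assoc, h, last_mul_inner, (commute_twist_inner j).eq, mul_assoc, h', mul_smul_comm]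

theorem twist_sq_mul_pair (hs : outerScalar N q c ≠ 0) (t : ℂ) : twist N q c * twist N q c *
    (((q ^ 4 - 1) * t) • idem N q c + algebraMap ℂ _ t) = algebraMap ℂ _ (q ^ 4 * t) := by
  simp only [twist, Algebra.algebraMap_eq_smul_one, sub_mul, mul_sub, mul_add, smul_mul_assoc,
    mul_smul_comm, idem_mul_idem hs, one_mul, mul_one]
  match_scalars <;> ring

theorem exists_inner_hom (hs : outerScalar N q c ≠ 0) (hq : q ≠ 0) (hN : Even N) :
    ∃ φ : Cl N q (c * q ^ 2) →ₐ[ℂ] Cl (N + 2) q c,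
      ∀ j, φ (γ N q (c * q ^ 2) j) = twist N q c * γ (N + 2) q c (inner j) := by
  have hmul : ∀ i j : Fin N, twist N q c * γ (N + 2) q c (inner i) *
      (twist N q c * γ (N + 2) q c (inner j)) =
      twist N q c * twist N q c * (γ (N + 2) q c (inner i) * γ (N + 2) q c (inner j)) :=
    fun i j => (commute_twist_inner i).symm.mul_mul_mul_comm _ _
  let g : FreeAlgebra ℂ (Fin N) →ₐ[ℂ] Cl (N + 2) q c :=
    FreeAlgebra.lift ℂ fun j => twist N q c * γ (N + 2) q c (inner j)
  have hg : ∀ j, g (gen j) = twist N q c * γ (N + 2) q c (inner j) :=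
    fun j => FreeAlgebra.lift_ι_apply _ _
  refine ⟨RingQuot.liftAlgHom ℂ ⟨g, ?_⟩, fun j => by
    rw [γ, RingQuot.liftAlgHom_mkAlgHom_apply, hg]⟩
  intro x y hxy
  cases hxy with
  | sq i h => rw [map_mul, hg, hmul, γ_sq (inner i) (by rw [inner_val]; omega), mul_zero, map_zero]
  | swap i j hlt h =>
    rw [map_smul, map_mul, map_mul, hg, hg, hmul, hmul,
      γ_swap (inner i) (inner j) (inner_lt_inner hlt) (by simp; omega), mul_smul_comm]
  | pair i h =>
    have hsummand : ∀ k : Fin N, g (gen k * gen (dual k)) = twist N q c * twist N q c *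
        (γ (N + 2) q c (inner k) * γ (N + 2) q c (dual (inner k))) := fun k => by
      rw [map_mul, hg, hg, hmul, dual_inner]
    rw [map_add, map_add, map_neg, map_smul, hsummand, map_mul, hg, hg, hmul, ← dual_inner, pairSum,
      map_sum, AlgHom.commutes]
    refine eq_neg_add_add_iff.2 ?_
    simp only [map_smul, hsummand]
    rw [← mul_add, γ_pair (inner i) (by simp; omega), sum_Iio_inner, dual_zero, zero_mul_last hs]
    set t : ℂ := c ^ 2 * q ^ ((N : ℤ) - 2 * (i.val : ℤ) - 1) * (q + q⁻¹) with ht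
    have hsum : ∀ k : Fin N, q ^ (2 * ((inner k).val : ℤ) - 2 * ((inner i).val : ℤ) + 2) =
        q ^ (2 * (k.val : ℤ) - 2 * (i.val : ℤ) + 2) := fun k => by
      congr 1
      simp only [inner_val]
      push_cast
      ring
    have hconst : c ^ 2 * q ^ (((N + 2 : ℕ) : ℤ) - 2 * ((inner i).val : ℤ) - 1) * (q + q⁻¹) = t := by
      rw [ht]
      congr 3
      simp only [inner_val]
      push_cast
      ring
    have hfirst : (q ^ 2 - q⁻¹ ^ 2) * (q ^ (2 * (((0 : Fin (N + 2)).val : ℕ) : ℤ) -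
        2 * ((inner i).val : ℤ) + 2) * outerScalar N q c) = (q ^ 4 - 1) * t := by
      have h2 : q ^ (2 * (((0 : Fin (N + 2)).val : ℕ) : ℤ) - 2 * ((inner i).val : ℤ) + 2) *
          q ^ ((N : ℤ) + 1) = q ^ 2 * q ^ ((N : ℤ) - 2 * (i.val : ℤ) - 1) := by
        rw [← zpow_natCast q 2, ← zpow_add₀ hq, ← zpow_add₀ hq]
        congr 1
        simp only [inner_val, Fin.val_zero]
        push_cast
        ring
      have h3 : (q ^ 2 - q⁻¹ ^ 2) * q ^ 2 = q ^ 4 - 1 := by field_simp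
      rw [ht, outerScalar, ← h3]
      linear_combination (q ^ 2 - q⁻¹ ^ 2) * c ^ 2 * (q + q⁻¹) * h2
    have htarget : (c * q ^ 2) ^ 2 * q ^ ((N : ℤ) - 2 * (i.val : ℤ) - 1) * (q + q⁻¹) =
        q ^ 4 * t := by
      rw [ht]
      ring
    rw [hconst, htarget, ← twist_sq_mul_pair hs]
    simp only [hsum, smul_add, smul_smul, mul_add, mul_smul_comm, Finset.mul_sum, hfirst]
    abel
  | middle i h => obtain ⟨m, rfl⟩ := hN; omega

end Step

theorem exists_expansion {N : ℕ} {q c : ℂ} (hq : q ≠ 0) (hs : outerScalar N q c ≠ 0)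
    (φ : Cl N q (c * q ^ 2) →ₐ[ℂ] Cl (N + 2) q c)
    (hφ : ∀ j, φ (γ N q (c * q ^ 2) j) = twist N q c * γ (N + 2) q c (inner j))
    (ha : ∀ p, γ (N + 2) q c 0 * φ p = φ p * γ (N + 2) q c 0)
    (hb : ∀ p, γ (N + 2) q c (Fin.last _) * φ p = φ p * γ (N + 2) q c (Fin.last _))
    (x : Cl (N + 2) q c) : ∃ p r t w, x = φ p * (γ (N + 2) q c 0 * γ (N + 2) q c (Fin.last _)) +
      φ r * γ (N + 2) q c 0 + φ t * γ (N + 2) q c (Fin.last _) + φ w := by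
  set a := γ (N + 2) q c 0
  set b := γ (N + 2) q c (Fin.last _)
  set s := outerScalar N q c
  let P : Cl (N + 2) q c → Prop := fun x =>
    ∃ p r t w, x = φ p * (a * b) + φ r * a + φ t * b + φ w
  have hadd : ∀ x y, P x → P y → P (x + y) := by
    rintro _ _ ⟨p, r, t, w, rfl⟩ ⟨p', r', t', w', rfl⟩
    refine ⟨p + p', r + r', t + t', w + w', ?_⟩
    simp only [map_add, add_mul]
    abel
  have hsmul : ∀ (u : ℂ) x, P x → P (u • x) := by
    rintro u _ ⟨p, r, t, w, rfl⟩
    exact ⟨u • p, u • r, u • t, u • w, by simp only [map_smul, smul_mul_assoc, smul_add]⟩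
  have hφmul : ∀ y x, P x → P (φ y * x) := by
    rintro y _ ⟨p, r, t, w, rfl⟩
    exact ⟨y * p, y * r, y * t, y * w, by simp only [map_mul, mul_assoc, mul_add]⟩
  have hzero : ∀ x, P x → P (a * x) := by
    rintro _ ⟨p, r, t, w, rfl⟩
    refine ⟨t, w, 0, 0, ?_⟩
    have haa : a * a = 0 := γ_zero_sq
    simp only [mul_add, ← mul_assoc, ha, map_zero, zero_mul, add_zero]
    simp only [mul_assoc, haa, mul_zero]
    simp only [zero_mul, zero_add]
  have hlast : ∀ x, P x → P (b * x) := by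
    rintro _ ⟨p, r, t, w, rfl⟩
    refine ⟨(-1 : ℂ) • r, 0, s • p + w, s • r, ?_⟩
    have hbb : b * b = 0 := γ_last_sq
    have hba : b * a = s • 1 + (-1 : ℂ) • (a * b) := by
      rw [← Algebra.algebraMap_eq_smul_one, ← outer_anticommutator]
      module
    have hbab : b * (a * b) = s • b :=
      mul_mul_self_of_anticommutator hbb ((add_comm _ _).trans outer_anticommutator)
    simp only [mul_add, ← mul_assoc b (φ _), hb]
    simp only [mul_assoc, hbab, hba, hbb, mul_zero, add_zero, map_add, map_smul, map_zero,
      zero_mul, mul_add, add_mul, mul_smul_comm, smul_mul_assoc, mul_one]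
    module
  refine induction_left (P := P) ⟨0, 0, 0, 1, by simp⟩ hadd hsmul (fun i x hx => ?_) x
  obtain rfl | rfl | ⟨j, rfl⟩ := eq_zero_or_last_or_inner i
  · exact hzero x hx
  · exact hlast x hx
  · have hx' := hφmul (γ N q (c * q ^ 2) j) x hx
    have hsplit : γ (N + 2) q c (inner j) * x =
        ((1 + q⁻¹ ^ 2) * s⁻¹) • (a * (b * (φ (γ N q (c * q ^ 2) j) * x))) +
          (-q⁻¹ ^ 2) • (φ (γ N q (c * q ^ 2) j) * x) := by
      conv_lhs => rw [← one_mul (γ (N + 2) q c (inner j)), ← inverse_mul_twist hs hq,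
        mul_assoc _ (twist N q c), ← hφ, mul_assoc, idem]
      simp only [add_mul, smul_mul_assoc, one_mul, smul_smul, mul_assoc]
      rfl
    rw [hsplit]
    exact hadd _ _ (hsmul _ _ (hzero _ (hlast _ hx'))) (hsmul _ _ hx')

theorem eq_bot_or_eq_top_succ {N : ℕ} {q c : ℂ} (hq : q ≠ 0) (hs : outerScalar N q c ≠ 0)
    (hN : Even N) (hB : ∀ J : TwoSidedIdeal (Cl N q (c * q ^ 2)), J = ⊥ ∨ J = ⊤)
    (I : TwoSidedIdeal (Cl (N + 2) q c)) : I = ⊥ ∨ I = ⊤ := by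
  obtain ⟨φ, hφ⟩ := exists_inner_hom hs hq hN
  have hcomm : ∀ x, (∀ j : Fin N, x * (twist N q c * γ (N + 2) q c (inner j)) =
      twist N q c * γ (N + 2) q c (inner j) * x) → ∀ p, x * φ p = φ p * x := by
    intro x hx p
    induction p using induction_left with
    | h1 => simp
    | hadd y z hy hz => rw [map_add, mul_add, add_mul, hy, hz]
    | hsmul t y hy => rw [map_smul, mul_smul_comm, smul_mul_assoc, hy]
    | hγ i y hy => rw [map_mul, hφ, ← mul_assoc, hx, mul_assoc, hy, ← mul_assoc]
  have ha := hcomm _ (zero_commute_twisted hs)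
  have hb := hcomm _ (last_commute_twisted hs)
  exact eq_bot_or_eq_top_of_anticommuting_pair φ _ _ _ hs γ_zero_sq γ_last_sq
    outer_anticommutator ha hb (exists_expansion hq hs φ hφ ha hb) hB I

theorem eq_bot_or_eq_top_zero (q c : ℂ) (I : TwoSidedIdeal (Cl 0 q c)) : I = ⊥ ∨ I = ⊤ := by
  have hscalar : ∀ x : Cl 0 q c, ∃ t : ℂ, x = algebraMap ℂ _ t := by
    intro x
    induction x using induction_left with
    | h1 => exact ⟨1, (map_one _).symm⟩
    | hadd y z hy hz =>
      obtain ⟨u, rfl⟩ := hy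
      obtain ⟨v, rfl⟩ := hz
      exact ⟨u + v, (map_add _ _ _).symm⟩
    | hsmul t y hy =>
      obtain ⟨u, rfl⟩ := hy
      exact ⟨t * u, by rw [map_mul, Algebra.smul_def]⟩
    | hγ i => exact i.elim0
  by_cases h : ∃ t : ℂ, t ≠ 0 ∧ algebraMap ℂ (Cl 0 q c) t ∈ I
  · right
    obtain ⟨t, ht, hI⟩ := h
    rw [eq_top_iff]
    intro x _
    have := I.mul_mem_left (x * algebraMap ℂ _ t⁻¹) _ hI
    rwa [mul_assoc, ← map_mul, inv_mul_cancel₀ ht, map_one, mul_one] at this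
  · left
    push Not at h
    rw [eq_bot_iff]
    intro x hx
    obtain ⟨t, rfl⟩ := hscalar x
    by_cases ht : t = 0
    · simp [ht]
    · exact absurd hx (h t ht)

/-- for even `N = 2n`, `Cl_{2n}(q,c)` is simple: its only two-sided ideals
are `{0}` and the whole algebra. -/
theorem even_clifford_simple (n : ℕ) (hn : 2 ≤ n) (q c : ℂ)
    (hq : q ≠ 0) (hqr : ∀ m : ℕ, 0 < m → q ^ m ≠ 1) (hc : c ≠ 0) :
    ∀ I : TwoSidedIdeal (Cl (2 * n) q c), I = ⊥ ∨ I = ⊤ := by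
  have hqq : q + q⁻¹ ≠ 0 := by
    intro h
    field_simp at h
    exact hqr 4 (by norm_num) (by linear_combination (q ^ 2 - 1) * h)
  clear hn
  induction n generalizing c with
  | zero => exact eq_bot_or_eq_top_zero q c
  | succ n ih =>
    exact eq_bot_or_eq_top_succ hq
      (mul_ne_zero (mul_ne_zero (pow_ne_zero 2 hc) (zpow_ne_zero _ hq)) hqq) (even_two_mul n)
      (ih (c * q ^ 2) (mul_ne_zero hc (pow_ne_zero 2 hq)))

end FRT
end
end

section
/- Suppose μ_1,…,μ_N ∈ ℂ˟ and z ∈ Cl_N(q,c) is nonzero with z γ_i = μ_i γ_i z for all i. Then μ_i μ_{i'} = 1 for all i, and μ_j = 1 whenever j = j' (i.e., for j = n+1 when N = 2n+1). -/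
noncomputable section

namespace FRT

lemma eq_zero_of_list_prod_mul_eq_zero {A : Type*} [Ring A] {l : List A}
    (h : ∀ u ∈ l, ∀ w : A, u * w = 0 → w = 0) {w : A} (hw : l.prod * w = 0) : w = 0 := by
  induction l with
  | nil => simpa using hw
  | cons u l ih =>
    rw [List.prod_cons, mul_assoc] at hw
    exact ih (fun v hv => h v (List.mem_cons_of_mem _ hv)) (h u List.mem_cons_self _ hw)

section QCommutation

variable {A : Type*} [Ring A] [Algebra ℂ A]

/-- `u` and `w` commute up to the scalar `r`: `u w = r w u`. -/
def QCommute (r : ℂ) (u w : A) : Prop := u * w = r • (w * u)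

lemma QCommute.mul {r s : ℂ} {u v w : A} (hu : QCommute r u w) (hv : QCommute s v w) :
    QCommute (r * s) (u * v) w := by
  unfold QCommute at *
  rw [mul_assoc, hv, mul_smul_comm, ← mul_assoc, hu, smul_mul_assoc, smul_smul, mul_assoc,
    mul_comm r s]

lemma QCommute.add {r : ℂ} {u v w : A} (hu : QCommute r u w) (hv : QCommute r v w) :
    QCommute r (u + v) w := by
  unfold QCommute at *
  rw [add_mul, hu, hv, mul_add, smul_add]

lemma QCommute.smul {r : ℂ} {u w : A} (hu : QCommute r u w) (a : ℂ) :
    QCommute r (a • u) w := by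
  unfold QCommute at *
  rw [smul_mul_assoc, hu, mul_smul_comm, smul_comm]

lemma QCommute.symm {r : ℂ} {u w : A} (hr : r ≠ 0) (hu : QCommute r u w) :
    QCommute r⁻¹ w u := by
  unfold QCommute at *
  rw [hu, smul_smul, inv_mul_cancel₀ hr, one_smul]

lemma QCommute.prod_range {r : ℕ → ℂ} {d : ℕ → A} {w : A} {n : ℕ}
    (h : ∀ k < n, QCommute (r k) (d k) w) :
    QCommute (∏ k ∈ Finset.range n, r k) ((List.range n).map d).prod w := by
  induction n with
  | zero => simp [QCommute]
  | succ n ih =>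
    rw [Finset.prod_range_succ, List.range_succ, List.map_append, List.prod_append]
    simpa using (ih fun k hk => h k (by omega)).mul (h n (by omega))

/-- A combination of `x y` and `y x` with nonzero coefficients annihilates only what `(x y + y x)²`
annihilates. -/
lemma eq_zero_of_combination_mul_eq_zero {x y z : A} {a b : ℂ} (ha : a ≠ 0) (hb : b ≠ 0)
    (hx : x * x = 0) (hy : y * y = 0)
    (hreg : ∀ w : A, (x * y + y * x) * w = 0 → w = 0)
    (h : (a • (x * y) + b • (y * x)) * z = 0) : z = 0 := by
  have hxx : (x * y) * (y * x) = 0 := by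
    rw [mul_assoc, ← mul_assoc y, hy, zero_mul, mul_zero]
  have hyy : (y * x) * (x * y) = 0 := by
    rw [mul_assoc, ← mul_assoc x, hx, zero_mul, mul_zero]
  have key : (a⁻¹ • (x * y) + b⁻¹ • (y * x)) * (a • (x * y) + b • (y * x))
      = (x * y + y * x) * (x * y + y * x) := by
    simp only [add_mul, mul_add, smul_mul_assoc, mul_smul_comm, hxx, hyy, smul_zero, add_zero,
      zero_add, smul_inv_smul₀ ha, smul_inv_smul₀ hb]
  apply hreg
  apply hreg
  rw [← mul_assoc, ← key, mul_assoc, h, mul_zero]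

lemma commute_of_mul_eq_smul {x y z : A} {a b : ℂ} (hab : a * b = 1)
    (hx : z * x = a • (x * z)) (hy : z * y = b • (y * z)) : Commute z (x * y) := by
  have h : QCommute (a⁻¹ * b⁻¹) (x * y) z :=
    QCommute.mul (QCommute.symm (left_ne_zero_of_mul_eq_one hab) hx)
      (QCommute.symm (right_ne_zero_of_mul_eq_one hab) hy)
  rw [← mul_inv, hab, inv_one] at h
  unfold QCommute at h
  rw [one_smul] at h
  exact h.symm

lemma eq_one_of_eq_smul {a : ℂ} {w : A} (hw : w ≠ 0) (h : w = a • w) : a = 1 := by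
  have : (1 - a) • w = 0 := by rw [sub_smul, one_smul, ← h, sub_self]
  rcases smul_eq_zero.mp this with h | h
  · exact (sub_eq_zero.mp h).symm
  · exact absurd h hw

/-- If `x y + y x` commutes with `z` and
`z ≠ 0` is not annihilated by it, then the scalars of `x` and `y` are inverse to each other. -/
lemma mul_eq_one_of_commute_anticommutator {x y z : A} {a b : ℂ} (hz : z ≠ 0)
    (hx : z * x = a • (x * z)) (hy : z * y = b • (y * z))
    (hreg : ∀ w : A, (x * y + y * x) * w = 0 → w = 0)
    (hc : Commute z (x * y + y * x)) : a * b = 1 := by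
  have h1 : z * (x * y + y * x) = (a * b) • ((x * y + y * x) * z) := by
    rw [mul_add, ← mul_assoc, ← mul_assoc, hx, hy, smul_mul_assoc, smul_mul_assoc, mul_assoc x,
      mul_assoc y, hx, hy, mul_smul_comm, mul_smul_comm, smul_smul, smul_smul, mul_comm b a,
      ← smul_add, ← mul_assoc, ← mul_assoc, add_mul]
  rw [hc.eq] at h1
  exact eq_one_of_eq_smul (fun h => hz (hreg _ h)) h1

/-- A product of elements `x k y k + b k y k x k` twisted by `e` commutes with every `x i` and
`y i`, for a suitable choice of the scalars `b k`. -/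
lemma commute_twisted_prod {q : ℂ} (hq : q ≠ 0) {n : ℕ} {x y : ℕ → A} {e : A}
    (hx2 : ∀ k < n, x k * x k = 0) (hy2 : ∀ k < n, y k * y k = 0)
    (hxx : ∀ i k, i < k → k < n → QCommute (-q ^ 2) (x k) (x i))
    (hyy : ∀ i k, i < k → k < n → QCommute (-q ^ 2) (y i) (y k))
    (hyx : ∀ i k, i < n → k < n → i ≠ k → QCommute (-q ^ 2) (y k) (x i))
    (hex : ∀ i < n, QCommute (-q ^ 2) e (x i))
    (hye : ∀ i < n, QCommute (-q ^ 2) (y i) e) {W : A}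
    (hW : W = e * ((List.range n).map fun k =>
      x k * y k + (-q ^ (2 + 4 * (n - 1 - k))) • (y k * x k)).prod) :
    (∀ i < n, Commute W (x i)) ∧ (∀ i < n, Commute W (y i)) ∧ Commute W e := by
  have hs : -q ^ 2 ≠ 0 := neg_ne_zero.mpr (pow_ne_zero _ hq)
  have hb : ∀ m : ℕ, -q ^ m ≠ 0 := fun m => neg_ne_zero.mpr (pow_ne_zero _ hq)
  have pairs : ∀ {r s b : ℂ} {u v w : A}, QCommute r u w → QCommute s v w →
      QCommute (r * s) (u * v + b • (v * u)) w := fun hu hv =>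
    (hu.mul hv).add ((mul_comm (G := ℂ) _ _ ▸ hv.mul hu).smul _)
  let r : ℕ → ℕ → ℂ := fun i k =>
    if k < i then 1 else if k = i then (-q ^ (2 + 4 * (n - 1 - i)))⁻¹ else q ^ 4
  have hr : ∀ i < n, -q ^ 2 * ∏ k ∈ Finset.range n, r i k = 1 := by
    intro i hi
    obtain ⟨m, rfl⟩ : ∃ m, n = i + 1 + m := ⟨n - (i + 1), by omega⟩
    rw [Finset.prod_range_add, Finset.prod_range_succ]
    have h1 : ∏ k ∈ Finset.range i, r i k = 1 :=
      Finset.prod_eq_one fun k hk => by simp [r, Finset.mem_range.mp hk]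
    have h2 : ∏ k ∈ Finset.range m, r i (i + 1 + k) = (q ^ 4) ^ m := by
      rw [Finset.prod_congr rfl (g := fun _ => q ^ 4)]
      · simp
      · intro k _
        have h3 : ¬ i + 1 + k < i := by omega
        have h4 : ¬ i + 1 + k = i := by omega
        simp only [r, h3, h4, if_false]
    have h3 : r i i = (-q ^ (2 + 4 * m))⁻¹ := by
      have : i + 1 + m - 1 - i = m := by omega
      simp only [r, lt_irrefl, if_false, if_true, this]
    rw [h1, h2, h3, ← pow_mul, pow_add]
    field_simp
  have hcomm : ∀ {u w : A}, QCommute 1 u w → Commute u w := fun {u w} h => by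
    unfold QCommute at h
    rwa [one_smul] at h
  refine ⟨fun i hi => hcomm ?_, fun i hi => hcomm ?_, hcomm ?_⟩
  · rw [hW, ← hr i hi]
    refine (hex i hi).mul (QCommute.prod_range fun k hk => ?_)
    rcases lt_trichotomy k i with h | h | h
    · have := pairs (b := -q ^ (2 + 4 * (n - 1 - k)))
        ((hxx k i h hi).symm hs) (hyx i k hi hk (by omega))
      rw [inv_mul_cancel₀ hs] at this
      simpa [r, h] using this
    · subst h
      simp only [r, lt_irrefl, if_false, if_true]
      unfold QCommute
      rw [add_mul, mul_add, smul_mul_assoc, mul_smul_comm, mul_assoc (y k), hx2 k hk, mul_zero,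
        smul_zero, add_zero, ← mul_assoc (x k) (x k), hx2 k hk, zero_mul, zero_add, smul_smul,
        inv_mul_cancel₀ (hb _), one_smul, mul_assoc]
    · have := pairs (b := -q ^ (2 + 4 * (n - 1 - k)))
        (hxx i k h hk) (hyx i k hi hk (by omega))
      have h3 : ¬ k < i := by omega
      have h4 : ¬ k = i := by omega
      have h5 : -q ^ 2 * -q ^ 2 = q ^ 4 := by ring
      rw [h5] at this
      simpa only [r, h3, h4, if_false] using this
  · have hr' : (-q ^ 2)⁻¹ * ∏ k ∈ Finset.range n, (r i k)⁻¹ = 1 := by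
      rw [Finset.prod_inv_distrib, ← mul_inv, hr i hi, inv_one]
    rw [hW, ← hr']
    refine ((hye i hi).symm hs).mul (QCommute.prod_range fun k hk => ?_)
    rcases lt_trichotomy k i with h | h | h
    · have := pairs (b := -q ^ (2 + 4 * (n - 1 - k)))
        ((hyx k i hk hi (by omega)).symm hs) (hyy k i h hi)
      rw [inv_mul_cancel₀ hs] at this
      simpa [r, h] using this
    · subst h
      simp only [r, lt_irrefl, if_false, if_true, inv_inv]
      unfold QCommute
      rw [add_mul, mul_add, smul_mul_assoc, mul_smul_comm, mul_assoc (x k) (y k), hy2 k hk,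
        mul_zero, zero_add, ← mul_assoc (y k) (y k), hy2 k hk, zero_mul, smul_zero, add_zero,
        mul_assoc]
    · have := pairs (b := -q ^ (2 + 4 * (n - 1 - k)))
        ((hyx k i hk hi (by omega)).symm hs) ((hyy i k h hk).symm hs)
      have h3 : ¬ k < i := by omega
      have h4 : ¬ k = i := by omega
      have h5 : (-q ^ 2)⁻¹ * (-q ^ 2)⁻¹ = (q ^ 4)⁻¹ := by rw [← mul_inv]; ring
      rw [h5] at this
      simpa only [r, h3, h4, if_false] using this
  · have h1 : (1 : ℂ) = 1 * ∏ _k ∈ Finset.range n, (1 : ℂ) := by simp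
    rw [hW, h1]
    refine QCommute.mul (by simp [QCommute]) (QCommute.prod_range fun k hk => ?_)
    have := pairs (b := -q ^ (2 + 4 * (n - 1 - k))) ((hex k hk).symm hs) (hye k hk)
    rwa [inv_mul_cancel₀ hs] at this

/-- The anticommutators `x i y i + y i x i` for `i < n`, extended to `i = n`: given elements `T i`
obeying the recursion below, each `T i` with `i ≤ n` is left regular and commutes with any `z ≠ 0`
that commutes up to scalars with all `x i` and `y i`; moreover these scalars are inverse in
pairs. -/
lemma anticommutator_induction {q : ℂ} (hq : q ≠ 0) {n : ℕ} {x y T : ℕ → A} {z : A} {a b : ℕ → ℂ}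
    {C : ℂ} (hC : C ≠ 0) (hz : z ≠ 0) (hT0 : T 0 = algebraMap ℂ A C)
    (hT : ∀ i < n, T i = x i * y i + y i * x i)
    (hTs : ∀ i < n, T (i + 1) = q ^ 2 • (x i * y i) + (q ^ 2)⁻¹ • (y i * x i))
    (hx2 : ∀ k < n, x k * x k = 0) (hy2 : ∀ k < n, y k * y k = 0)
    (hzx : ∀ i < n, z * x i = a i • (x i * z)) (hzy : ∀ i < n, z * y i = b i • (y i * z)) :
    (∀ i ≤ n, ∀ w : A, T i * w = 0 → w = 0) ∧ ∀ i < n, a i * b i = 1 := by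
  have key : ∀ i ≤ n, (∀ w : A, T i * w = 0 → w = 0) ∧ Commute z (T i) := by
    intro i
    induction i with
    | zero =>
      refine fun _ => ⟨fun w hw => ?_, ?_⟩
      · rw [hT0, ← Algebra.smul_def] at hw
        exact (smul_eq_zero.mp hw).resolve_left hC
      · rw [hT0]
        exact (Algebra.commutes C z).symm
    | succ i ih =>
      intro hi
      obtain ⟨hreg, hcom⟩ := ih (by omega)
      rw [hT i hi] at hreg hcom
      have hab := mul_eq_one_of_commute_anticommutator hz (hzx i hi) (hzy i hi) hreg hcom
      rw [hTs i hi]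
      refine ⟨fun w => eq_zero_of_combination_mul_eq_zero (pow_ne_zero 2 hq)
        (inv_ne_zero (pow_ne_zero 2 hq)) (hx2 i hi) (hy2 i hi) hreg, ?_⟩
      exact ((commute_of_mul_eq_smul hab (hzx i hi) (hzy i hi)).smul_right _).add_right
        ((commute_of_mul_eq_smul ((mul_comm _ _).trans hab) (hzy i hi) (hzx i hi)).smul_right _)
  refine ⟨fun i hi => (key i hi).1, fun i hi => ?_⟩
  obtain ⟨hreg, hcom⟩ := key i hi.le
  rw [hT i hi] at hreg hcom
  exact mul_eq_one_of_commute_anticommutator hz (hzx i hi) (hzy i hi) hreg hcom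

end QCommutation

section Generators

variable {N : ℕ} {q c : ℂ}

lemma gamma_mul_self {i : Fin N} (h : 2 * i.val + 1 ≠ N) : γ N q c i * γ N q c i = 0 := by
  have := RingQuot.mkAlgHom_rel ℂ (Rel.sq (q := q) (c := c) i h)
  rwa [map_mul, map_zero] at this

lemma gamma_qcommute {i j : Fin N} (hlt : i < j) (h : i.val + j.val + 1 ≠ N) :
    QCommute (-q ^ 2) (γ N q c j) (γ N q c i) := by
  have := RingQuot.mkAlgHom_rel ℂ (Rel.swap (q := q) (c := c) i j hlt h)
  rwa [map_mul, map_smul, map_mul] at this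

/-- An element commuting with all generators is central. -/
lemma commute_of_commute_gamma {W : Cl N q c} (h : ∀ i, Commute W (γ N q c i)) (z : Cl N q c) :
    Commute W z := by
  obtain ⟨u, rfl⟩ := RingQuot.mkAlgHom_surjective ℂ (Rel N q c) z
  induction u using FreeAlgebra.induction with
  | grade0 r => rw [AlgHom.commutes]; exact (Algebra.commutes r W).symm
  | grade1 i => exact h i
  | mul a b ha hb => rw [map_mul]; exact ha.mul_right hb
  | add a b ha hb => rw [map_add]; exact ha.add_right hb

variable (N q c) in
/-- The generators indexed by `ℕ`, with value `0` out of range. -/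
def gammaNat (k : ℕ) : Cl N q c := if h : k < N then γ N q c ⟨k, h⟩ else 0

lemma gammaNat_val (i : Fin N) : gammaNat N q c i.val = γ N q c i := by simp [gammaNat]

lemma gammaNat_dual (i : Fin N) : gammaNat N q c (N - 1 - i.val) = γ N q c (dual i) :=
  gammaNat_val (dual i)

variable (N q c) in
/-- The element `∑_{k<i} q^{2k-2i+2} γ_k γ_{k'}` of `Cl_N(q,c)`. -/
def pairSumNat (i : ℕ) : Cl N q c :=
  ∑ k ∈ Finset.range i, (q ^ (2 * (k : ℤ) - 2 * (i : ℤ) + 2)) •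
    (gammaNat N q c k * gammaNat N q c (N - 1 - k))

lemma mkAlgHom_pairSum (i : Fin N) :
    RingQuot.mkAlgHom ℂ (Rel N q c) (pairSum N q i) = pairSumNat N q c i.val := by
  rw [pairSum, pairSumNat, map_sum, ← Nat.Iio_eq_range, ← Fin.map_valEmbedding_Iio,
    Finset.sum_map]
  refine Finset.sum_congr rfl fun k _ => ?_
  rw [map_smul, map_mul, Fin.valEmbedding_apply, gammaNat_val, gammaNat_dual]
  rfl

variable (N q c) in
/-- The right-hand side of the anticommutator `γ_i γ_{i'} + γ_{i'} γ_i`, for all `i`. -/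
def anticomm (i : ℕ) : Cl N q c :=
  (q ^ 2 - q⁻¹ ^ 2) • pairSumNat N q c i +
    algebraMap ℂ _ (c ^ 2 * q ^ ((N : ℤ) - 2 * (i : ℤ) - 1) * (q + q⁻¹))

lemma anticomm_zero : anticomm N q c 0 =
    algebraMap ℂ _ (c ^ 2 * q ^ ((N : ℤ) - 1) * (q + q⁻¹)) := by
  simp [anticomm, pairSumNat]

lemma anticomm_eq {i : ℕ} (h : 2 * i + 1 < N) : anticomm N q c i =
    gammaNat N q c i * gammaNat N q c (N - 1 - i) +
      gammaNat N q c (N - 1 - i) * gammaNat N q c i := by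
  lift i to Fin N using (by omega)
  have := RingQuot.mkAlgHom_rel ℂ (Rel.pair (q := q) (c := c) i h)
  rw [map_mul, map_add, map_add, map_neg, map_mul, map_smul, mkAlgHom_pairSum,
    AlgHom.commutes, add_assoc] at this
  rw [gammaNat_val, gammaNat_dual]
  exact eq_add_of_neg_add_eq this.symm

lemma pairSumNat_succ (hq : q ≠ 0) (i : ℕ) : pairSumNat N q c (i + 1) =
    (q ^ 2)⁻¹ • pairSumNat N q c i + gammaNat N q c i * gammaNat N q c (N - 1 - i) := by
  rw [pairSumNat, Finset.sum_range_succ, pairSumNat, Finset.smul_sum]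
  congr 1
  · refine Finset.sum_congr rfl fun k _ => ?_
    rw [smul_smul]
    congr 1
    have : (2 * (k : ℤ) - 2 * ((i + 1 : ℕ) : ℤ) + 2) = -2 + (2 * (k : ℤ) - 2 * (i : ℤ) + 2) := by
      push_cast; ring
    rw [this, zpow_add₀ hq]
    rfl
  · have : (2 * (i : ℤ) - 2 * ((i + 1 : ℕ) : ℤ) + 2) = 0 := by push_cast; ring
    rw [this, zpow_zero, one_smul]

lemma anticomm_succ (hq : q ≠ 0) {i : ℕ} (h : 2 * i + 1 < N) : anticomm N q c (i + 1) =
    q ^ 2 • (gammaNat N q c i * gammaNat N q c (N - 1 - i)) +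
      (q ^ 2)⁻¹ • (gammaNat N q c (N - 1 - i) * gammaNat N q c i) := by
  have h1 : anticomm N q c (i + 1) = (q ^ 2)⁻¹ • anticomm N q c i +
      (q ^ 2 - q⁻¹ ^ 2) • (gammaNat N q c i * gammaNat N q c (N - 1 - i)) := by
    have h2 : q ^ ((N : ℤ) - 2 * ((i + 1 : ℕ) : ℤ) - 1) =
        (q ^ 2)⁻¹ * q ^ ((N : ℤ) - 2 * (i : ℤ) - 1) := by
      have : (N : ℤ) - 2 * ((i + 1 : ℕ) : ℤ) - 1 = -2 + ((N : ℤ) - 2 * (i : ℤ) - 1) := by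
        push_cast; ring
      rw [this, zpow_add₀ hq]
      rfl
    simp only [anticomm, h2, pairSumNat_succ hq, Algebra.algebraMap_eq_smul_one]
    module
  rw [h1, anticomm_eq h, inv_pow]
  module

lemma anticomm_middle {i : ℕ} (h : 2 * i + 1 = N) : anticomm N q c i =
    (q + q⁻¹) • (gammaNat N q c i * gammaNat N q c i) := by
  lift i to Fin N using (by omega)
  have := RingQuot.mkAlgHom_rel ℂ (Rel.middle (q := q) (c := c) i h)
  rw [map_mul, map_add, map_smul, mkAlgHom_pairSum, AlgHom.commutes] at this
  change γ N q c i * γ N q c i = _ at this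
  have h2 : (N : ℤ) - 2 * (i.val : ℤ) - 1 = 0 := by omega
  rw [gammaNat_val, this, anticomm, h2, zpow_zero, Algebra.algebraMap_eq_smul_one,
    Algebra.algebraMap_eq_smul_one]
  module

lemma gammaNat_mul_self {k : ℕ} (h : 2 * k + 1 ≠ N) (hk : k < N) :
    gammaNat N q c k * gammaNat N q c k = 0 := by
  lift k to Fin N using hk
  rw [gammaNat_val]
  exact gamma_mul_self h

lemma gammaNat_qcommute {i j : ℕ} (hlt : i < j) (hj : j < N) (h : i + j + 1 ≠ N) :
    QCommute (-q ^ 2) (gammaNat N q c j) (gammaNat N q c i) := by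
  lift j to Fin N using hj
  lift i to Fin N using hlt.trans j.2
  rw [gammaNat_val, gammaNat_val]
  exact gamma_qcommute hlt h

end Generators

/-- if `z ≠ 0` and `zγ_i = μ_i γ_i z` for all `i` with all `μ_i ≠ 0`, then
`μ_i μ_{i'} = 1` for all `i`, and `μ_j = 1` for `j = j'`. -/
theorem mu_mul_mu_dual_eq_one (N : ℕ) (hN : 3 ≤ N) (q c : ℂ)
    (hq : q ≠ 0) (hqr : ∀ m : ℕ, 0 < m → q ^ m ≠ 1) (hc : c ≠ 0)
    (μ : Fin N → ℂ) (hμ : ∀ i, μ i ≠ 0)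
    (z : Cl N q c) (hz0 : z ≠ 0)
    (hz : ∀ i : Fin N, z * γ N q c i = μ i • (γ N q c i * z)) :
    (∀ i : Fin N, μ i * μ (dual i) = 1) ∧
    (∀ j : Fin N, 2 * j.val + 1 = N → μ j = 1) := by
  have hC : c ^ 2 * q ^ ((N : ℤ) - 1) * (q + q⁻¹) ≠ 0 := by
    refine mul_ne_zero (mul_ne_zero (pow_ne_zero 2 hc) (zpow_ne_zero _ hq)) fun h => ?_
    refine hqr 4 (by norm_num) ?_
    field_simp at h
    linear_combination (q ^ 2 - 1) * h
  have hqq : q + q⁻¹ ≠ 0 := right_ne_zero_of_mul hC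
  let a : ℕ → ℂ := fun k => if h : k < N then μ ⟨k, h⟩ else 0
  have ha : ∀ i : Fin N, a i.val = μ i := fun i => by simp [a]
  have hza : ∀ k < N, z * gammaNat N q c k = a k • (gammaNat N q c k * z) := by
    intro k hk
    lift k to Fin N using hk
    rw [gammaNat_val, ha]
    exact hz k
  have induct : ∀ n : ℕ, 2 * n ≤ N →
      (∀ i ≤ n, ∀ w : Cl N q c, anticomm N q c i * w = 0 → w = 0) ∧
        ∀ i < n, a i * a (N - 1 - i) = 1 := fun n hn =>
    anticommutator_induction (x := gammaNat N q c) (y := fun k => gammaNat N q c (N - 1 - k))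
      (b := fun k => a (N - 1 - k)) hq hC hz0 anticomm_zero
      (fun i hi => anticomm_eq (by omega)) (fun i hi => anticomm_succ hq (by omega))
      (fun k hk => gammaNat_mul_self (by omega) (by omega))
      (fun k hk => gammaNat_mul_self (by omega) (by omega))
      (fun k hk => hza k (by omega)) (fun k hk => hza _ (by omega))
  have low : ∀ i : ℕ, 2 * i + 1 < N → a i * a (N - 1 - i) = 1 := fun i hi =>
    (induct (i + 1) (by omega)).2 i (by omega)
  have mid : ∀ n : ℕ, 2 * n + 1 = N → a n = 1 := by
    intro n hn
    let d : ℕ → Cl N q c := fun k =>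
      gammaNat N q c k * gammaNat N q c (N - 1 - k) +
        (-q ^ (2 + 4 * (n - 1 - k))) • (gammaNat N q c (N - 1 - k) * gammaNat N q c k)
    obtain ⟨W, hW⟩ : ∃ W, W = gammaNat N q c n * ((List.range n).map d).prod := ⟨_, rfl⟩
    have hcentral := commute_twisted_prod (x := gammaNat N q c)
      (y := fun k => gammaNat N q c (N - 1 - k)) (e := gammaNat N q c n) hq
      (fun k hk => gammaNat_mul_self (by omega) (by omega))
      (fun k hk => gammaNat_mul_self (by omega) (by omega))
      (fun i k hik hk => gammaNat_qcommute hik (by omega) (by omega))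
      (fun i k hik hk => gammaNat_qcommute (by omega) (by omega) (by omega))
      (fun i k hi hk hik => gammaNat_qcommute (by omega) (by omega) (by omega))
      (fun i hi => gammaNat_qcommute hi (by omega) (by omega))
      (fun i hi => gammaNat_qcommute (by omega) (by omega) (by omega)) hW
    have hWz : Commute W z := by
      refine commute_of_commute_gamma (fun i => ?_) z
      rw [← gammaNat_val]
      rcases lt_trichotomy i.val n with h | h | h
      · exact hcentral.1 _ h
      · rw [h]
        exact hcentral.2.2
      · have h1 := hcentral.2.1 (N - 1 - i.val) (by omega)
        have h2 : N - 1 - (N - 1 - i.val) = i.val := by omega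
        simpa only [h2] using h1
    have hdz : Commute z ((List.range n).map d).prod := by
      refine Commute.list_prod_right _ _ fun u hu => ?_
      obtain ⟨k, hk, rfl⟩ := List.mem_map.mp hu
      have hk : k < n := List.mem_range.mp hk
      have hab := low k (by omega)
      exact (commute_of_mul_eq_smul hab (hza k (by omega)) (hza _ (by omega))).add_right
        ((commute_of_mul_eq_smul ((mul_comm _ _).trans hab) (hza _ (by omega))
          (hza k (by omega))).smul_right _)
    have hreg : ∀ w, W * w = 0 → w = 0 := by
      intro w hw
      rw [hW, mul_assoc] at hw
      have h1 : ((List.range n).map d).prod * w = 0 := by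
        refine (induct n (by omega)).1 n le_rfl _ ?_
        rw [anticomm_middle hn, smul_mul_assoc, mul_assoc, hw, mul_zero, smul_zero]
      refine eq_zero_of_list_prod_mul_eq_zero (fun u hu v hv => ?_) h1
      obtain ⟨k, hk, rfl⟩ := List.mem_map.mp hu
      have hk : k < n := List.mem_range.mp hk
      refine eq_zero_of_combination_mul_eq_zero one_ne_zero
        (neg_ne_zero.mpr (pow_ne_zero (2 + 4 * (n - 1 - k)) hq))
        (gammaNat_mul_self (N := N) (q := q) (c := c) (k := k) (by omega) (by omega))
        (gammaNat_mul_self (k := N - 1 - k) (by omega) (by omega)) (fun v hv => ?_)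
        (by rwa [one_smul])
      exact (induct n (by omega)).1 k hk.le v (by rwa [anticomm_eq (by omega)])
    refine eq_one_of_eq_smul (fun h => hz0 (hreg _ h)) (w := W * z) ?_
    calc W * z = z * W := hWz
      _ = a n • (W * z) := by
        rw [hW, ← mul_assoc, hza n (by omega), smul_mul_assoc, mul_assoc, hdz.eq, ← mul_assoc]
  have hdual : ∀ i : Fin N, a (N - 1 - i.val) = μ (dual i) := fun i => ha (dual i)
  refine ⟨fun i => ?_, fun j hj => by rw [← ha, mid _ hj]⟩
  rw [← ha, ← hdual]
  have := i.2
  rcases lt_trichotomy (2 * i.val + 1) N with h | h | h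
  · exact low _ h
  · have h1 : N - 1 - i.val = i.val := by omega
    rw [h1, mid _ h, mul_one]
  · have h1 := low (N - 1 - i.val) (by omega)
    have h2 : N - 1 - (N - 1 - i.val) = i.val := by omega
    rw [h2] at h1
    rw [mul_comm, h1]

end FRT
end
end
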